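/- arXiv:1211.5122 — 2 statements merged into one kernel-verified Lean document; each statement's English description precedes it below -/
import Mathlib

section
/- If T is a tree, then for any assignment of lists L_v of size 2 of real numbers to the vertices of T, there exists a vertex weighting w with w(v) ∈ L_v for each v such that for every edge uv, the sum of w over the neighbours of u differs from the sum of w over the neighbours of v. That is, ch^v_Σ(T) ≤ 2. -/
open Finset

lemma coeff_prod_pos_aux {V : Type*} [DecidableEq V] (Q : V → MvPolynomial V ℝ)
    (s : Finset V)
    (hQ : ∀ v m, 0 ≤ (Q v).coeff m) (hQ1 : ∀ v ∈ s, 0 < (Q v).coeff (Finsupp.single v 1)) :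
    (∀ m, 0 ≤ (∏ v ∈ s, Q v).coeff m) ∧
      0 < (∏ v ∈ s, Q v).coeff (∑ v ∈ s, Finsupp.single v 1) := by
  induction s using Finset.induction_on with
  | empty =>
    constructor
    · intro m
      simp only [Finset.prod_empty, MvPolynomial.coeff_one]
      split_ifs <;> norm_num
    · simp
  | insert a s ha ih =>
    obtain ⟨h1, h2⟩ := ih (fun v hv => hQ1 v (Finset.mem_insert_of_mem hv))
    rw [Finset.prod_insert ha, Finset.sum_insert ha]
    constructor
    · intro m
      rw [MvPolynomial.coeff_mul]
      exact Finset.sum_nonneg fun x _ => mul_nonneg (hQ _ _) (h1 _)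
    · rw [MvPolynomial.coeff_mul]
      refine Finset.sum_pos' (fun x _ => mul_nonneg (hQ _ _) (h1 _)) ?_
      refine ⟨(Finsupp.single a 1, ∑ v ∈ s, Finsupp.single v 1), by simp, ?_⟩
      exact mul_pos (hQ1 a (Finset.mem_insert_self _ _)) h2

lemma coeff_sum_X_nonneg_aux {V : Type*} (s : Finset V) (m : V →₀ ℕ) :
    0 ≤ (∑ x ∈ s, (MvPolynomial.X x : MvPolynomial V ℝ)).coeff m := by
  classical
  rw [MvPolynomial.coeff_sum]
  refine Finset.sum_nonneg fun x _ => ?_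
  rw [MvPolynomial.coeff_X]
  split_ifs <;> norm_num

lemma coeff_sum_X_pos_aux {V : Type*} (s : Finset V) (v : V) (hv : v ∈ s) :
    0 < (∑ x ∈ s, (MvPolynomial.X x : MvPolynomial V ℝ)).coeff (Finsupp.single v 1) := by
  classical
  rw [MvPolynomial.coeff_sum]
  refine Finset.sum_pos' (fun x _ => ?_) ⟨v, hv, by simp⟩
  rw [MvPolynomial.coeff_X]
  split_ifs <;> norm_num

lemma exists_parent_aux {V : Type*} (T : SimpleGraph V) (hT : T.IsTree) (r : V) :
    ∃ g : V → V, (∀ v, v ≠ r → T.Adj (g v) v) ∧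
      ∀ u v, T.Adj u v → (v ≠ r ∧ g v = u) ∨ (u ≠ r ∧ g u = v) := by
  choose f hf hf' using (hT.existsUnique_path r ·)
  refine ⟨fun v => (f v).penultimate, fun v hv => ?_, ?_⟩
  · exact (f v).adj_penultimate (SimpleGraph.Walk.not_nil_of_ne hv.symm)
  · have key : ∀ u v, T.Adj u v → T.dist r v = T.dist r u + 1 →
        v ≠ r ∧ (f v).penultimate = u := by
      intro u v h hd
      refine ⟨fun hvr => by subst hvr; simp at hd, ?_⟩
      obtain ⟨a, ha⟩ := hT.connected.exists_walk_length_eq_dist r u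
      have hp : (a.concat h).IsPath := by
        apply SimpleGraph.Walk.isPath_of_length_eq_dist
        rw [SimpleGraph.Walk.length_concat, ha, hd]
      rw [← hf' v _ hp]
      simp
    intro u v h
    rcases hT.dist_eq_dist_add_one_of_adj r h with hd | hd
    · exact Or.inr (key v u h.symm hd)
    · exact Or.inl (key u v h hd)

/-- If `T` is a tree, then for any assignment of lists of two real numbers to
the vertices there is a choice of vertex weights from the lists such that
adjacent vertices receive distinct sums of weights over their neighbourhoods:
`ch^v_Σ(T) ≤ 2`. -/
theorem tree_additive_choosability_two {V : Type*} [Fintype V] [DecidableEq V]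
    (T : SimpleGraph V) [DecidableRel T.Adj]
    (hconn : T.Connected) (hacyclic : T.IsAcyclic)
    (L : V → Finset ℝ) (hL : ∀ v, (L v).card = 2) :
    ∃ w : V → ℝ, (∀ v, w v ∈ L v) ∧
      ∀ u v, T.Adj u v →
        (∑ x ∈ T.neighborFinset u, w x) ≠ (∑ x ∈ T.neighborFinset v, w x) := by
  have hT : T.IsTree := ⟨hconn, hacyclic⟩
  obtain ⟨r⟩ := hconn.nonempty
  obtain ⟨g, hg1, hg2⟩ := exists_parent_aux T hT r
  -- signs from the bipartition
  obtain ⟨ε, hε1, hε2⟩ : ∃ ε : V → ℝ, (∀ v, ε v * ε v = 1) ∧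
      ∀ u v, T.Adj u v → ε v = - ε u := by
    refine ⟨fun v => (-1) ^ T.dist r v, fun v => ?_, fun u v h => ?_⟩
    · rw [← mul_pow]; norm_num
    · rcases hT.dist_eq_dist_add_one_of_adj r h with hd | hd <;> simp only [hd, pow_succ] <;> ring
  have hε0 : ∀ v, ε v ≠ 0 := fun v h => by simpa [h] using hε1 v
  let Q : V → MvPolynomial V ℝ := fun v =>
    ∑ x ∈ T.neighborFinset (g v), MvPolynomial.X x + ∑ x ∈ T.neighborFinset v, MvPolynomial.X x
  let s : Finset V := univ.erase r
  let t : V →₀ ℕ := ∑ v ∈ s, Finsupp.single v 1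
  have hc : 0 < (∏ v ∈ s, Q v).coeff t := by
    refine (coeff_prod_pos_aux Q s (fun v m => ?_) (fun v hv => ?_)).2
    · rw [MvPolynomial.coeff_add]
      exact add_nonneg (coeff_sum_X_nonneg_aux _ _) (coeff_sum_X_nonneg_aux _ _)
    · rw [MvPolynomial.coeff_add]
      refine add_pos_of_pos_of_nonneg (coeff_sum_X_pos_aux _ _ ?_) (coeff_sum_X_nonneg_aux _ _)
      rw [SimpleGraph.mem_neighborFinset]
      exact hg1 v (Finset.ne_of_mem_erase hv)
  have htdeg : t.degree = s.card := by
    simp [t, map_sum]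
  have hdeg : (∏ v ∈ s, Q v).totalDegree = t.degree := by
    apply le_antisymm
    · rw [htdeg]
      refine (MvPolynomial.totalDegree_finsetProd _ _).trans ?_
      rw [Finset.card_eq_sum_ones]
      refine Finset.sum_le_sum fun v _ => ?_
      have hs : ∀ S : Finset V,
          (∑ x ∈ S, (MvPolynomial.X x : MvPolynomial V ℝ)).totalDegree ≤ 1 := fun S =>
        MvPolynomial.totalDegree_finsetSum_le fun x _ => (MvPolynomial.totalDegree_X x).le
      exact (MvPolynomial.totalDegree_add _ _).trans (max_le (hs _) (hs _))
    · exact MvPolynomial.le_totalDegree (MvPolynomial.mem_support_iff.2 hc.ne')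
  have ht : ∀ v, t v ≤ 1 := by
    intro v
    simp only [t, Finsupp.finsetSum_apply, Finsupp.single_apply]
    rw [Finset.sum_ite_eq']
    split_ifs <;> norm_num
  obtain ⟨y, hy, hne⟩ := MvPolynomial.combinatorial_nullstellensatz_exists_eval_nonzero
    (∏ v ∈ s, Q v) t hc.ne' hdeg (fun v => (L v).image (fun a => ε v * a)) (by
      intro v
      rw [Finset.card_image_of_injective _ (mul_right_injective₀ (hε0 v)), hL v]
      have := ht v
      omega)
  rw [map_prod, Finset.prod_ne_zero_iff] at hne
  refine ⟨fun v => ε v * y v, fun v => ?_, ?_⟩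
  · obtain ⟨a, ha, hay⟩ := Finset.mem_image.1 (hy v)
    simp only [← hay, ← mul_assoc, hε1, one_mul]
    exact ha
  · have hsum : ∀ u, ∑ x ∈ T.neighborFinset u, ε x * y x
        = - ε u * ∑ x ∈ T.neighborFinset u, y x := by
      intro u
      rw [Finset.mul_sum]
      refine Finset.sum_congr rfl fun x hx => ?_
      rw [hε2 u x ((SimpleGraph.mem_neighborFinset _ _ _).1 hx)]
    have key : ∀ v, v ≠ r → ∑ x ∈ T.neighborFinset (g v), ε x * y x ≠
        ∑ x ∈ T.neighborFinset v, ε x * y x := by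
      intro v hv h
      have h1 := hne v (Finset.mem_erase.2 ⟨hv, Finset.mem_univ _⟩)
      simp only [Q, map_add, map_sum, MvPolynomial.eval_X] at h1
      rw [hsum, hsum, hε2 _ _ (hg1 v hv)] at h
      apply h1
      apply mul_left_cancel₀ (hε0 (g v))
      linarith
    intro u v h
    rcases hg2 u v h with ⟨h1, h2⟩ | ⟨h1, h2⟩
    · have := key v h1
      rwa [h2] at this
    · have := key u h1
      rw [h2] at this
      exact this.symm
end

section
/- If G is a d-regular bipartite graph with d ≥ 3, then χ^e_Σ(G) ≤ 2: there is an edge weighting with weights in {1,2} such that adjacent vertices receive distinct sums of incident edge weights. -/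
open Finset

namespace RB
set_option linter.unusedSectionVars false
set_option linter.unusedSimpArgs false
variable {V : Type*} [Fintype V] [DecidableEq V]

/-- `K` avoids `S` and is closed under adjacency outside `S`. -/
def Cl (G : SimpleGraph V) (S K : Finset V) : Prop :=
  Disjoint K S ∧ ∀ x ∈ K, ∀ y, G.Adj x y → y ∈ K ∨ y ∈ S

/-- Removing `S` leaves a connected graph. -/
def Conn (G : SimpleGraph V) (S : Finset V) : Prop :=
  ∀ K, Cl G S K → K = ∅ ∨ K = Sᶜ

/-- `F` is a symmetric mod 2 edge set avoiding `S`. -/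
def Sup (G : SimpleGraph V) (S : Finset V) (F : V → V → ZMod 2) : Prop :=
  (∀ x y, F x y = F y x) ∧ ∀ x y, F x y ≠ 0 → G.Adj x y ∧ x ∉ S ∧ y ∉ S

lemma z2 (x : ZMod 2) : x = 0 ∨ x = 1 := by
  revert x; decide

lemma z2add (x : ZMod 2) : x + x = 0 := by
  revert x; decide

lemma Sup.zero {G : SimpleGraph V} {S : Finset V} : Sup G S (0 : V → V → ZMod 2) :=
  ⟨fun _ _ => rfl, fun _ _ h => absurd rfl h⟩

lemma Sup.add {G : SimpleGraph V} {S : Finset V} {F F' : V → V → ZMod 2}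
    (h : Sup G S F) (h' : Sup G S F') : Sup G S (F + F') := by
  refine ⟨fun x y => by simp [h.1 x y, h'.1 x y], fun x y hxy => ?_⟩
  by_cases h0 : F x y = 0
  · apply h'.2
    simpa [h0] using hxy
  · exact h.2 x y h0

lemma Sup.sum {G : SimpleGraph V} {S : Finset V} {ι : Type*} (s : Finset ι)
    (f : ι → V → V → ZMod 2) (h : ∀ i ∈ s, Sup G S (f i)) : Sup G S (∑ i ∈ s, f i) := by
  classical
  induction s using Finset.induction_on with
  | empty => simpa using Sup.zero
  | insert a s ha ih =>
    rw [Finset.sum_insert ha]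
    exact (h a (by simp)).add (ih fun i hi => h i (by simp [hi]))

lemma Sup.mono {G : SimpleGraph V} {S S' : Finset V} {F : V → V → ZMod 2}
    (h : Sup G S F) (hs : S' ⊆ S) : Sup G S' F :=
  ⟨h.1, fun x y hxy => ⟨(h.2 x y hxy).1, fun h1 => (h.2 x y hxy).2.1 (hs h1),
    fun h1 => (h.2 x y hxy).2.2 (hs h1)⟩⟩

/-- The graph with `S` deleted. -/
def del (G : SimpleGraph V) (S : Finset V) : SimpleGraph V where
  Adj x y := G.Adj x y ∧ x ∉ S ∧ y ∉ S
  symm := ⟨fun _ _ h => ⟨h.1.symm, h.2.2, h.2.1⟩⟩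
  loopless := ⟨fun _ h => G.loopless.irrefl _ h.1⟩

lemma edge_sup {G : SimpleGraph V} {S : Finset V} {u v : V} (h : (del G S).Adj u v) :
    ∃ F, Sup G S F ∧ ∀ x, ∑ y, F x y = (Pi.single u 1 + Pi.single v 1 : V → ZMod 2) x := by
  have huv : u ≠ v := h.1.ne
  refine ⟨fun x y => if (x = u ∧ y = v) ∨ (x = v ∧ y = u) then 1 else 0, ⟨?_, ?_⟩, ?_⟩
  · intro x y
    exact if_congr (by tauto) rfl rfl
  · intro x y hxy
    have : (x = u ∧ y = v) ∨ (x = v ∧ y = u) := by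
      by_contra hc; simp [hc] at hxy
    rcases this with ⟨rfl, rfl⟩ | ⟨rfl, rfl⟩
    · exact h
    · exact h.symm
  · intro x
    by_cases h1 : x = u
    · subst h1; simp [huv]
    · by_cases h2 : x = v
      · subst h2; simp [h1]
      · simp [h1, h2]

lemma walk_sup {G : SimpleGraph V} {S : Finset V} {u v : V} (p : (del G S).Walk u v) :
    ∃ F, Sup G S F ∧ ∀ x, ∑ y, F x y = (Pi.single u 1 + Pi.single v 1 : V → ZMod 2) x := by
  induction p with
  | nil => exact ⟨0, Sup.zero, fun x => by simp [z2add]⟩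
  | @cons u v w h p ih =>
    obtain ⟨F, hF, hF'⟩ := ih
    obtain ⟨E, hE, hE'⟩ := edge_sup h
    refine ⟨E + F, hE.add hF, fun x => ?_⟩
    have := z2add ((Pi.single v 1 : V → ZMod 2) x)
    simp only [Pi.add_apply, Finset.sum_add_distrib] at *
    rw [hE', hF']
    linear_combination this

lemma tjoin (G : SimpleGraph V) (S : Finset V) (t : V → ZMod 2)
    (h : ∀ K, Cl G S K → ∑ x ∈ K, t x = 0) (hS : ∀ x ∈ S, t x = 0) :
    ∃ F, Sup G S F ∧ ∀ x, ∑ y, F x y = t x := by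
  classical
  let r : V → V := fun x => ((del G S).connectedComponentMk x).out
  have hr : ∀ x, (del G S).Reachable x (r x) := by
    intro x
    apply SimpleGraph.ConnectedComponent.exact
    exact (Quot.out_eq ((del G S).connectedComponentMk x)).symm
  have hr' : ∀ x y, (del G S).Reachable x y → r x = r y := by
    intro x y hxy
    simp only [r]
    rw [SimpleGraph.ConnectedComponent.sound hxy]
  choose P hP hP' using fun x => walk_sup (hr x).some
  let Q : V → V → V → ZMod 2 := fun x => if t x = 0 then 0 else P x
  have hQ : ∀ v x, ∑ y, Q v x y = t v * (Pi.single v 1 + Pi.single (r v) 1 : V → ZMod 2) x := by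
    intro v x
    rcases z2 (t v) with h0 | h0
    · simp [Q, h0]
    · simp only [Q, h0, one_ne_zero, if_false, one_mul]
      exact hP' v x
  refine ⟨∑ v, Q v, Sup.sum _ _ fun v _ => ?_, fun x => ?_⟩
  · simp only [Q]; split_ifs
    · exact Sup.zero
    · exact hP v
  · have e1 : ∑ y, (∑ v, Q v) x y = ∑ v, ∑ y, Q v x y := by
      rw [Finset.sum_comm]; simp [Finset.sum_apply]
    rw [e1]
    simp only [hQ, Pi.add_apply, mul_add, Finset.sum_add_distrib]
    have e2 : ∑ v, t v * (Pi.single v 1 : V → ZMod 2) x = t x := by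
      rw [Finset.sum_eq_single x]
      · simp
      · intro b _ hb; simp [Pi.single_apply, hb.symm]
      · simp
    have e3 : ∑ v, t v * (Pi.single (r v) 1 : V → ZMod 2) x = 0 := by
      have : ∑ v, t v * (Pi.single (r v) 1 : V → ZMod 2) x
          = ∑ v ∈ univ.filter (fun v => r v = x ∧ v ∉ S), t v := by
        rw [Finset.sum_filter]
        refine Finset.sum_congr rfl fun v _ => ?_
        by_cases hv : v ∈ S
        · simp [hS v hv]
        · by_cases hx : r v = x
          · subst hx; simp [hv]
          · simp [hx, Pi.single_apply, Ne.symm hx]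
      rw [this]
      apply h
      refine ⟨?_, ?_⟩
      · rw [Finset.disjoint_left]; intro a ha; simp at ha; exact ha.2
      · intro u hu y huy
        simp only [mem_filter, mem_univ, true_and] at hu ⊢
        by_cases hy : y ∈ S
        · exact Or.inr hy
        · left
          refine ⟨?_, hy⟩
          rw [← hu.1]
          apply hr'
          exact (SimpleGraph.Adj.reachable (show (del G S).Adj y u from ⟨huy.symm, hy, hu.2⟩))
    rw [e2, e3, add_zero]

lemma tjoin_conn {G : SimpleGraph V} {S : Finset V} (hc : Conn G S) (t : V → ZMod 2)
    (h : ∑ x, t x = 0) (hS : ∀ x ∈ S, t x = 0) :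
    ∃ F, Sup G S F ∧ ∀ x, ∑ y, F x y = t x := by
  refine tjoin G S t (fun K hK => ?_) hS
  rcases hc K hK with rfl | rfl
  · simp
  · rw [← Finset.sum_add_sum_compl S, Finset.sum_eq_zero hS, zero_add] at h
    exact h

lemma Cl.compl {G : SimpleGraph V} {S K : Finset V} (h : Cl G S K) : Cl G S (K ∪ S)ᶜ := by
  refine ⟨?_, ?_⟩
  · rw [Finset.disjoint_left]; intro a ha; simp at ha; exact ha.2
  · intro x hx y hxy
    simp only [mem_compl, mem_union, not_or] at hx ⊢
    by_contra hc
    have hyK : y ∈ K := by tauto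
    have := h.2 y hyK x hxy.symm
    tauto

/-- Signed counting of edges leaving `K`. -/
lemma cut {G : SimpleGraph V} [DecidableRel G.Adj] {d : ℕ} (hreg : ∀ v, G.degree v = d)
    (σ : V → ℤ) (hσ : ∀ x y, G.Adj x y → σ x = - σ y) {S K : Finset V} (h : Cl G S K) :
    d * ∑ x ∈ K, σ x = - ∑ y ∈ S, σ y * (#(G.neighborFinset y ∩ K) : ℤ) := by
  have key : ∀ X : Finset V, ∀ y, (#(G.neighborFinset y ∩ X) : ℤ)
      = ∑ x ∈ X, if G.Adj x y then 1 else 0 := by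
    intro X y
    rw [Finset.sum_boole]
    congr 2
    ext x; simp [G.adj_comm, and_comm]
  have hd : ∀ x ∈ K, (d : ℤ) = ∑ y ∈ K, (if G.Adj x y then 1 else 0)
      + ∑ y ∈ S, if G.Adj x y then 1 else 0 := by
    intro x hx
    rw [← Finset.sum_union h.1, Finset.sum_boole, ← hreg x, ← G.card_neighborFinset_eq_degree]
    congr 2
    ext y
    simp only [SimpleGraph.mem_neighborFinset, mem_filter, mem_union]
    exact ⟨fun hy => ⟨h.2 x hx y hy, hy⟩, fun hy => hy.2⟩
  have h0 : ∑ x ∈ K, ∑ y ∈ K, σ x * (if G.Adj x y then 1 else 0 : ℤ) = 0 := by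
    have : ∑ x ∈ K, ∑ y ∈ K, σ x * (if G.Adj x y then 1 else 0 : ℤ)
        = - ∑ x ∈ K, ∑ y ∈ K, σ x * (if G.Adj x y then 1 else 0 : ℤ) := by
      conv_lhs => rw [Finset.sum_comm]
      rw [← Finset.sum_neg_distrib]
      refine Finset.sum_congr rfl fun x _ => ?_
      rw [← Finset.sum_neg_distrib]
      refine Finset.sum_congr rfl fun y _ => ?_
      by_cases hxy : G.Adj x y
      · simp [hxy, hxy.symm, hσ y x hxy.symm]
      · simp [hxy, G.adj_comm y x]
    linarith
  calc d * ∑ x ∈ K, σ x = ∑ x ∈ K, σ x * (∑ y ∈ K, (if G.Adj x y then 1 else 0)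
      + ∑ y ∈ S, if G.Adj x y then 1 else 0) := by
        rw [Finset.mul_sum]
        refine Finset.sum_congr rfl fun x hx => ?_
        rw [← hd x hx, mul_comm]
    _ = ∑ x ∈ K, ∑ y ∈ S, σ x * (if G.Adj x y then 1 else 0) := by
        simp only [mul_add, Finset.sum_add_distrib, Finset.mul_sum]
        rw [h0, zero_add]
    _ = _ := by
        rw [Finset.sum_comm, ← Finset.sum_neg_distrib]
        refine Finset.sum_congr rfl fun y _ => ?_
        rw [key, Finset.mul_sum, ← Finset.sum_neg_distrib]
        refine Finset.sum_congr rfl fun x _ => ?_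
        by_cases hxy : G.Adj x y
        · simp [hxy, hσ x y hxy]
        · simp [hxy]


lemma Cl.compl_ne {G : SimpleGraph V} {S K : Finset V} (h : Cl G S K) (hne : K ≠ Sᶜ) :
    (K ∪ S)ᶜ ≠ ∅ := by
  intro h0
  apply hne
  ext x
  have : x ∉ (K ∪ S)ᶜ := by rw [h0]; simp
  constructor
  · intro hx; simp only [mem_compl]; exact Finset.disjoint_left.1 h.1 hx
  · intro hx; simp only [mem_compl, mem_union] at this hx; tauto

lemma Cl.eq_empty {G : SimpleGraph V} (hc : Conn G ∅) {K : Finset V} (h : Cl G ∅ K) {z : V}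
    (hz : z ∉ K) : K = ∅ := by
  rcases hc K h with h | h
  · exact h
  · subst h; simp at hz

lemma sum_sigma (σ : V → ℤ) (h1 : ∀ x, σ x = 1 ∨ σ x = -1) (K : Finset V) :
    ∑ x ∈ K, σ x = (#(K.filter (fun x => σ x = 1)) : ℤ) - #(K.filter (fun x => σ x = -1)) := by
  rw [Finset.card_filter, Finset.card_filter]
  push_cast
  rw [← Finset.sum_sub_distrib]
  refine Finset.sum_congr rfl fun x _ => ?_
  rcases h1 x with h | h <;> simp [h]

/-- Facts on a separating adjacent pair. -/
lemma pair_facts {G : SimpleGraph V} [DecidableRel G.Adj] {d : ℕ}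
    (hreg : ∀ v, G.degree v = d) (hc : Conn G ∅)
    (σ : V → ℤ) (hσ : ∀ x y, G.Adj x y → σ x = - σ y)
    {z a : V} {K : Finset V} (hz : σ z = 1) (hza : G.Adj z a) (hK : Cl G {z, a} K)
    (hne : K ≠ ∅) :
    ∑ x ∈ K, σ x = 0 ∧ 1 ≤ #(G.neighborFinset a ∩ K) := by
  have ha : σ a = -1 := by rw [hσ a z hza.symm, hz]
  have hzK : z ∉ K := fun h => (Finset.disjoint_left.1 hK.1 h) (by simp)
  have haK : a ∉ K := fun h => (Finset.disjoint_left.1 hK.1 h) (by simp)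
  have hcut := cut hreg σ hσ hK
  rw [Finset.sum_pair hza.ne, hz, ha] at hcut
  have b1 : #(G.neighborFinset a ∩ K) < d := by
    rw [← hreg a, ← G.card_neighborFinset_eq_degree]
    apply Finset.card_lt_card
    rw [Finset.ssubset_iff_of_subset Finset.inter_subset_left]
    exact ⟨z, by simpa using hza.symm, by simp [hzK]⟩
  have b2 : #(G.neighborFinset z ∩ K) < d := by
    rw [← hreg z, ← G.card_neighborFinset_eq_degree]
    apply Finset.card_lt_card
    rw [Finset.ssubset_iff_of_subset Finset.inter_subset_left]
    exact ⟨a, by simpa using hza, by simp [haK]⟩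
  have h0 : ∑ x ∈ K, σ x = 0 := by
    by_contra hne
    have : ∑ x ∈ K, σ x ≤ -1 ∨ 1 ≤ ∑ x ∈ K, σ x := by omega
    rcases this with h | h
    · nlinarith
    · nlinarith
  refine ⟨h0, ?_⟩
  by_contra hlt
  rw [h0] at hcut
  have c1 : #(G.neighborFinset a ∩ K) = 0 := by omega
  have c2 : #(G.neighborFinset z ∩ K) = 0 := by omega
  rw [Finset.card_eq_zero] at c1 c2
  apply hne
  refine Cl.eq_empty hc ⟨by simp, fun x hx y hxy => ?_⟩ hzK
  rcases hK.2 x hx y hxy with h | h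
  · exact Or.inl h
  · simp only [mem_insert, mem_singleton] at h
    rcases h with rfl | rfl
    · exact absurd (show x ∈ G.neighborFinset y ∩ K by simp [hx, hxy.symm]) (by simp [c2])
    · exact absurd (show x ∈ G.neighborFinset y ∩ K by simp [hx, hxy.symm]) (by simp [c1])

lemma good_z {G : SimpleGraph V} [DecidableRel G.Adj] {d : ℕ} (hd : 3 ≤ d)
    (hreg : ∀ v, G.degree v = d) (hc : Conn G ∅)
    (σ : V → ℤ) (hσ : ∀ x y, G.Adj x y → σ x = - σ y) (h1 : ∀ x, σ x = 1 ∨ σ x = -1)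
    (hex : ∃ z, σ z = 1) :
    ∃ z, σ z = 1 ∧ ∀ a, G.Adj z a → Conn G {z, a} := by
  by_contra hcon
  push Not at hcon
  have hbad : ∀ z, σ z = 1 → ∃ a, G.Adj z a ∧ ∃ K, Cl G {z, a} K ∧ K ≠ ∅ ∧ K ≠ {z, a}ᶜ := by
    intro z hz
    obtain ⟨a, ha, hK⟩ := hcon z hz
    refine ⟨a, ha, ?_⟩
    simp only [Conn] at hK
    push Not at hK
    obtain ⟨K, k1, k2, k3⟩ := hK
    refine ⟨K, k1, ?_, k3⟩
    rintro rfl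
    simp at k2
  have main : ∀ n : ℕ, ∀ z a K, σ z = 1 → G.Adj z a → Cl G {z, a} K → K ≠ ∅ → K ≠ {z, a}ᶜ →
      #K = n → False := by
    intro n
    induction n using Nat.strong_induction_on with
    | _ n ih =>
    intro z a K hz hza hK hne hne' hn
    have ha : σ a = -1 := by rw [hσ a z hza.symm, hz]
    have hzK : z ∉ K := fun h => (Finset.disjoint_left.1 hK.1 h) (by simp)
    have haK : a ∉ K := fun h => (Finset.disjoint_left.1 hK.1 h) (by simp)
    have hne2 : (K ∪ {z, a})ᶜ ≠ ∅ := hK.compl_ne hne'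
    obtain ⟨s0, e1⟩ := pair_facts hreg hc σ hσ hz hza hK hne
    obtain ⟨-, e2⟩ := pair_facts hreg hc σ hσ hz hza hK.compl hne2
    have e3 : #(G.neighborFinset a ∩ K) + #(G.neighborFinset a ∩ (K ∪ {z, a})ᶜ) + 1 ≤ d := by
      rw [← hreg a, ← G.card_neighborFinset_eq_degree, ← Finset.card_union_of_disjoint]
      · apply Finset.card_lt_card
        rw [Finset.ssubset_iff_of_subset (Finset.union_subset Finset.inter_subset_left
          Finset.inter_subset_left)]
        exact ⟨z, by simpa using hza.symm, by simp [hzK]⟩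
      · rw [Finset.disjoint_left]; intro x; simp; tauto
    rw [sum_sigma σ h1] at s0
    have ⟨z', hz'K, hz', hz'a⟩ : ∃ z' ∈ K, σ z' = 1 ∧ ¬ G.Adj z' a := by
      by_contra hall
      push Not at hall
      have f1 : #(K.filter (fun x => σ x = 1)) ≤ #(G.neighborFinset a ∩ K) := by
        apply Finset.card_le_card
        intro x hx
        simp only [mem_filter] at hx
        simp [hx.1, (hall x hx.1 hx.2).symm]
      obtain ⟨b, hb⟩ : (G.neighborFinset a ∩ K).Nonempty := Finset.card_pos.1 e1
      simp only [mem_inter, SimpleGraph.mem_neighborFinset] at hb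
      have hσb : σ b = 1 := by rw [hσ b a hb.1.symm, ha]; rfl
      have f2 : d ≤ #(insert a (K.filter (fun x => σ x = -1))) := by
        rw [← hreg b, ← G.card_neighborFinset_eq_degree]
        apply Finset.card_le_card
        intro x hx
        simp only [SimpleGraph.mem_neighborFinset] at hx
        have hσx : σ x = -1 := by rw [hσ x b hx.symm, hσb]
        rcases hK.2 b hb.2 x hx with h | h
        · simp [h, hσx]
        · simp only [mem_insert, mem_singleton] at h
          rcases h with rfl | rfl
          · rw [hz] at hσx; norm_num at hσx
          · simp
      have := Finset.card_insert_le a (K.filter (fun x => σ x = -1))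
      omega
    obtain ⟨a', hza', L, hL, hLne, hLne'⟩ := hbad z' hz'
    have ha'K : a' ∈ K := by
      rcases hK.2 z' hz'K a' hza' with h | h
      · exact h
      · simp only [mem_insert, mem_singleton] at h
        rcases h with rfl | rfl
        · have := hσ _ _ hza'; rw [hz, hz'] at this; norm_num at this
        · exact absurd hza' hz'a
    have fin : ∀ L, Cl G {z', a'} L → L ≠ ∅ → L ≠ {z', a'}ᶜ → z ∉ L → False := by
      intro L hL hLne hLne' hzL
      have haL : a ∉ L := by
        intro h
        rcases hL.2 a h z hza.symm with h | h
        · exact hzL h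
        · simp only [mem_insert, mem_singleton] at h
          rcases h with rfl | rfl <;> contradiction
      have hQ : L \ K = ∅ := by
        refine Cl.eq_empty hc (z := z) ⟨by simp, fun x hx y hxy => ?_⟩ (by simp [hzL])
        left
        simp only [mem_sdiff] at hx ⊢
        have hyK : y ∉ K := by
          intro hyK
          rcases hK.2 y hyK x hxy.symm with h | h
          · exact hx.2 h
          · simp only [mem_insert, mem_singleton] at h
            rcases h with rfl | rfl
            · exact hzL hx.1
            · exact haL hx.1
        refine ⟨?_, hyK⟩
        rcases hL.2 x hx.1 y hxy with h | h
        · exact h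
        · simp only [mem_insert, mem_singleton] at h
          rcases h with rfl | rfl <;> contradiction
      have hsub : L ⊆ K := Finset.sdiff_eq_empty_iff_subset.1 hQ
      have hlt : #L < n := by
        rw [← hn]
        apply Finset.card_lt_card
        rw [Finset.ssubset_iff_of_subset hsub]
        exact ⟨z', hz'K, fun h => (Finset.disjoint_left.1 hL.1 h) (by simp)⟩
      exact ih _ hlt z' a' L hz' hza' hL hLne hLne' rfl
    by_cases hzL : z ∈ L
    · refine fin _ hL.compl ?_ ?_ (by simp [hzL])
      · exact hL.compl_ne hLne'
      · intro h
        apply hLne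
        ext x
        simp only [notMem_empty, iff_false]
        intro hx
        have h2 : x ∈ ({z', a'}ᶜ : Finset V) := by
          rw [mem_compl]; exact Finset.disjoint_left.1 hL.1 hx
        rw [← h] at h2
        simp [hx] at h2
    · exact fin L hL hLne hLne' hzL
  obtain ⟨z, hz⟩ := hex
  obtain ⟨a, hza, K, hK, hne, hne'⟩ := hbad z hz
  exact main _ z a K hz hza hK hne hne' rfl

/-- The cubic case: a vertex whose closed neighbourhood can be removed. -/
lemma good_cubic {G : SimpleGraph V} [DecidableRel G.Adj]
    (hreg : ∀ v, G.degree v = 3) (hc : Conn G ∅)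
    (σ : V → ℤ) (hσ : ∀ x y, G.Adj x y → σ x = - σ y) (h1 : ∀ x, σ x = 1 ∨ σ x = -1)
    (hex : ∃ z, σ z = 1) (hodd : Odd #(univ.filter (fun x : V => σ x = -1))) :
    ∃ z, σ z = 1 ∧ ∀ K, Cl G (insert z (G.neighborFinset z)) K →
      Even #(K.filter (fun x => σ x = -1)) := by
  by_contra hcon
  push Not at hcon
  have hcard : ∀ z, #(G.neighborFinset z) = 3 := fun z => by
    rw [G.card_neighborFinset_eq_degree, hreg]
  have hcomp : ∀ z K, σ z = 1 → Cl G (insert z (G.neighborFinset z)) K →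
      ¬ Even #(K.filter (fun x => σ x = -1)) →
      ¬ Even #((K ∪ insert z (G.neighborFinset z))ᶜ.filter (fun x => σ x = -1)) := by
    intro z K hz hK hKo
    have e : univ.filter (fun x : V => σ x = -1) = K.filter (fun x => σ x = -1) ∪
        (G.neighborFinset z ∪
          (K ∪ insert z (G.neighborFinset z))ᶜ.filter (fun x => σ x = -1)) := by
      ext x
      simp only [mem_filter, mem_univ, true_and, mem_union, mem_compl, mem_insert,
        SimpleGraph.mem_neighborFinset]
      have q1 : G.Adj z x → σ x = -1 := fun h => by rw [hσ x z h.symm, hz]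
      have q2 : x = z → σ x ≠ -1 := fun h => by rw [h, hz]; norm_num
      tauto
    rw [e, Finset.card_union_of_disjoint, Finset.card_union_of_disjoint, hcard] at hodd
    · rw [Nat.not_even_iff_odd] at hKo ⊢
      rw [Nat.odd_iff] at *
      omega
    · rw [Finset.disjoint_left]; intro x hx; simp at hx ⊢; tauto
    · rw [Finset.disjoint_left]; intro x hx
      have := Finset.disjoint_left.1 hK.1 (Finset.mem_filter.1 hx).1
      simp at hx this ⊢; tauto
  -- every odd closed set sees at least three edges
  have hedge : ∀ z K, σ z = 1 → Cl G (insert z (G.neighborFinset z)) K →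
      ¬ Even #(K.filter (fun x => σ x = -1)) →
      (3 * ∑ x ∈ K, σ x = ∑ y ∈ G.neighborFinset z, (#(G.neighborFinset y ∩ K) : ℤ)) ∧
      1 ≤ ∑ x ∈ K, σ x := by
    intro z K hz hK hKo
    have hzK : z ∉ K := fun h => (Finset.disjoint_left.1 hK.1 h) (by simp)
    have hcut := cut hreg σ hσ hK
    have hz0 : G.neighborFinset z ∩ K = ∅ := by
      ext x
      simp only [mem_inter, notMem_empty, iff_false, not_and]
      intro hx hxK
      exact (Finset.disjoint_left.1 hK.1 hxK) (by simp at hx ⊢; tauto)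
    rw [Finset.sum_insert (by simp), hz0] at hcut
    have : ∑ y ∈ G.neighborFinset z, σ y * (#(G.neighborFinset y ∩ K) : ℤ)
        = - ∑ y ∈ G.neighborFinset z, (#(G.neighborFinset y ∩ K) : ℤ) := by
      rw [← Finset.sum_neg_distrib]
      refine Finset.sum_congr rfl fun y hy => ?_
      rw [SimpleGraph.mem_neighborFinset] at hy
      rw [hσ y z hy.symm, hz]; ring
    rw [this] at hcut
    have hcut' : 3 * ∑ x ∈ K, σ x = ∑ y ∈ G.neighborFinset z, (#(G.neighborFinset y ∩ K) : ℤ) := by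
      simpa using hcut
    refine ⟨hcut', ?_⟩
    by_contra hlt
    have hle : ∑ y ∈ G.neighborFinset z, (#(G.neighborFinset y ∩ K) : ℤ) ≤ 0 := by
      rw [← hcut']; omega
    have hall : ∀ y ∈ G.neighborFinset z, (#(G.neighborFinset y ∩ K) : ℤ) = 0 := by
      rw [← Finset.sum_eq_zero_iff_of_nonneg (fun _ _ => by positivity)]
      exact le_antisymm hle (Finset.sum_nonneg fun _ _ => by positivity)
    have : K = ∅ := by
      refine Cl.eq_empty hc ⟨by simp, fun x hx y hxy => ?_⟩ hzK
      rcases hK.2 x hx y hxy with h | h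
      · exact Or.inl h
      · exfalso
        rw [mem_insert] at h
        have hx2 : x ∈ G.neighborFinset y ∩ K := by simp [hx, hxy.symm]
        rcases h with rfl | h
        · rw [hz0] at hx2; simp at hx2
        · have := hall y h
          rw [Nat.cast_eq_zero, Finset.card_eq_zero] at this
          rw [this] at hx2; simp at hx2
    subst this
    simp at hKo
  have main : ∀ n : ℕ, ∀ z K, σ z = 1 → Cl G (insert z (G.neighborFinset z)) K →
      ¬ Even #(K.filter (fun x => σ x = -1)) → #K = n → False := by
    intro n
    induction n using Nat.strong_induction_on with
    | _ n ih =>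
    intro z K hz hK hKo hn
    have hzK : z ∉ K := fun h => (Finset.disjoint_left.1 hK.1 h) (by simp)
    have hNK : ∀ x, G.Adj z x → x ∉ K := fun x hx h =>
      (Finset.disjoint_left.1 hK.1 h) (by simp [hx])
    obtain ⟨e1, e2⟩ := hedge z K hz hK hKo
    obtain ⟨e3, e4⟩ := hedge z _ hz hK.compl (hcomp z K hz hK hKo)
    have e5 : ∑ y ∈ G.neighborFinset z, (#(G.neighborFinset y ∩ K) : ℤ) +
        ∑ y ∈ G.neighborFinset z,
          (#(G.neighborFinset y ∩ (K ∪ insert z (G.neighborFinset z))ᶜ) : ℤ) ≤ 6 := by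
      rw [← Finset.sum_add_distrib]
      have : ∀ y ∈ G.neighborFinset z, (#(G.neighborFinset y ∩ K) : ℤ) +
          (#(G.neighborFinset y ∩ (K ∪ insert z (G.neighborFinset z))ᶜ) : ℤ) ≤ 2 := by
        intro y hy
        have : #(G.neighborFinset y ∩ K) +
            #(G.neighborFinset y ∩ (K ∪ insert z (G.neighborFinset z))ᶜ) < 3 := by
          rw [← hcard y, ← Finset.card_union_of_disjoint]
          · apply Finset.card_lt_card
            rw [Finset.ssubset_iff_of_subset (Finset.union_subset Finset.inter_subset_left
              Finset.inter_subset_left)]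
            rw [SimpleGraph.mem_neighborFinset] at hy
            exact ⟨z, by simpa using hy.symm, by simp [hzK]⟩
          · rw [Finset.disjoint_left]; intro x; simp; tauto
        exact_mod_cast Nat.lt_succ_iff.1 this
      have := Finset.sum_le_sum this
      simpa [hreg] using this
    have e6 : ∑ x ∈ K, σ x = 1 := by linarith
    have e7 : ∑ y ∈ G.neighborFinset z, (#(G.neighborFinset y ∩ K) : ℤ) = 3 := by
      rw [← e1, e6]; norm_num
    rw [sum_sigma σ h1] at e6
    have ⟨z', hz'K, hz', hz'N⟩ : ∃ z' ∈ K, σ z' = 1 ∧ ∀ a, G.Adj z' a → a ∈ K := by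
      by_contra hall
      push Not at hall
      have f1 : #(K.filter (fun x => σ x = 1)) ≤ 3 := by
        have : K.filter (fun x => σ x = 1) ⊆
            (G.neighborFinset z).biUnion (fun y => G.neighborFinset y ∩ K) := by
          intro x hx
          rw [mem_filter] at hx
          obtain ⟨a, hxa, haK⟩ := hall x hx.1 hx.2
          rw [mem_biUnion]
          rcases hK.2 x hx.1 a hxa with h | h
          · exact absurd h haK
          · rw [mem_insert] at h
            rcases h with rfl | h
            · exact absurd hx.1 (hNK x hxa.symm)
            · exact ⟨a, h, by simp [hxa.symm, hx.1]⟩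
        have h2 := (Finset.card_le_card this).trans Finset.card_biUnion_le
        have : (∑ y ∈ G.neighborFinset z, #(G.neighborFinset y ∩ K)) = 3 := by exact_mod_cast e7
        omega
      have f2 : #(K.filter (fun x => σ x = -1)) = 1 := by
        rw [Nat.not_even_iff_odd, Nat.odd_iff] at hKo
        omega
      obtain ⟨a, ha⟩ := Finset.card_pos.1 (by omega : 0 < #(K.filter (fun x => σ x = -1)))
      rw [mem_filter] at ha
      have f3 : 3 ≤ #(K.filter (fun x => σ x = 1)) := by
        rw [← hcard a]
        apply Finset.card_le_card
        intro x hx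
        rw [SimpleGraph.mem_neighborFinset] at hx
        have hσx : σ x = 1 := by rw [hσ x a hx.symm, ha.2]; rfl
        rw [mem_filter]
        refine ⟨?_, hσx⟩
        rcases hK.2 a ha.1 x hx with h | h
        · exact h
        · exfalso
          rw [mem_insert, SimpleGraph.mem_neighborFinset] at h
          rcases h with rfl | h
          · exact hNK a hx.symm ha.1
          · have := hσ _ _ h; rw [hz, hσx] at this; norm_num at this
      omega
    obtain ⟨L, hL, hLo⟩ := hcon z' hz'
    have hS' : ∀ y, y ∈ insert z' (G.neighborFinset z') → y ∈ K := by
      intro y hy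
      rw [mem_insert, SimpleGraph.mem_neighborFinset] at hy
      rcases hy with rfl | hy
      · exact hz'K
      · exact hz'N y hy
    have fin : ∀ L, Cl G (insert z' (G.neighborFinset z')) L →
        ¬ Even #(L.filter (fun x => σ x = -1)) → z ∉ L → False := by
      intro L hL hLo hzL
      have haL : ∀ a, G.Adj z a → a ∉ L := by
        intro a hza h
        rcases hL.2 a h z hza.symm with h | h
        · exact hzL h
        · exact hzK (hS' _ h)
      have hQ : L \ K = ∅ := by
        refine Cl.eq_empty hc (z := z) ⟨by simp, fun x hx y hxy => ?_⟩ (by simp [hzL])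
        left
        simp only [mem_sdiff] at hx ⊢
        have hyK : y ∉ K := by
          intro hyK
          rcases hK.2 y hyK x hxy.symm with h | h
          · exact hx.2 h
          · simp only [mem_insert, SimpleGraph.mem_neighborFinset] at h
            rcases h with rfl | h
            · exact hzL hx.1
            · exact haL x h hx.1
        refine ⟨?_, hyK⟩
        rcases hL.2 x hx.1 y hxy with h | h
        · exact h
        · exact absurd (hS' _ h) hyK
      have hsub : L ⊆ K := Finset.sdiff_eq_empty_iff_subset.1 hQ
      have hlt : #L < n := by
        rw [← hn]
        apply Finset.card_lt_card
        rw [Finset.ssubset_iff_of_subset hsub]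
        exact ⟨z', hz'K, fun h => (Finset.disjoint_left.1 hL.1 h) (by simp)⟩
      exact ih _ hlt z' L hz' hL hLo rfl
    have hLo' : ¬ Even #(L.filter (fun x => σ x = -1)) := by simpa using hLo
    by_cases hzL : z ∈ L
    · exact fin _ hL.compl (hcomp z' L hz' hL hLo') (by simp [hzL])
    · exact fin L hL hLo' hzL
  obtain ⟨z, hz⟩ := hex
  obtain ⟨K, hK, hKo⟩ := hcon z hz
  exact main _ z K hz hK (by simpa using hKo) rfl


/-- In the 4-regular case, a pair of neighbours failing to be removable gives a special set. -/
lemma four_aux {G : SimpleGraph V} [DecidableRel G.Adj]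
    (hreg : ∀ v, G.degree v = 4)
    (σ : V → ℤ) (hσ : ∀ x y, G.Adj x y → σ x = - σ y)
    {z a b : V} (hz : σ z = 1) (hza : G.Adj z a) (hzb : G.Adj z b) (hab : a ≠ b)
    (ha : Conn G {z, a}) (hb : Conn G {z, b}) (hn : ¬ Conn G {z, a, b}) :
    ∃ K, Cl G {z, a, b} K ∧ G.neighborFinset z ∩ K = ∅ ∧ #(G.neighborFinset a ∩ K) = 2 := by
  have hσa : σ a = -1 := by rw [hσ a z hza.symm, hz]
  have hσb : σ b = -1 := by rw [hσ b z hzb.symm, hz]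
  have hcard : ∀ z, #(G.neighborFinset z) = 4 := fun z => by
    rw [G.card_neighborFinset_eq_degree, hreg]
  simp only [Conn] at hn
  push Not at hn
  obtain ⟨K, hK, hne0, hne'⟩ := hn
  have hne : K ≠ ∅ := by rintro rfl; simp at hne0
  have facts : ∀ K, Cl G {z, a, b} K → K ≠ ∅ →
      1 ≤ #(G.neighborFinset a ∩ K) ∧ 1 ≤ #(G.neighborFinset b ∩ K) ∧
      (4 * ∑ x ∈ K, σ x = #(G.neighborFinset a ∩ K) + #(G.neighborFinset b ∩ K)
        - #(G.neighborFinset z ∩ K)) := by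
    intro K hK hne
    have hzK : z ∉ K := fun h => (Finset.disjoint_left.1 hK.1 h) (by simp)
    have haK : a ∉ K := fun h => (Finset.disjoint_left.1 hK.1 h) (by simp)
    have hbK : b ∉ K := fun h => (Finset.disjoint_left.1 hK.1 h) (by simp)
    refine ⟨?_, ?_, ?_⟩
    · by_contra h0
      have h0 : G.neighborFinset a ∩ K = ∅ := Finset.card_eq_zero.1 (by omega)
      have : Cl G {z, b} K := by
        refine ⟨?_, fun x hx y hxy => ?_⟩
        · rw [Finset.disjoint_left]; intro x hx h
          rw [mem_insert, mem_singleton] at h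
          rcases h with rfl | rfl <;> contradiction
        · rcases hK.2 x hx y hxy with h | h
          · exact Or.inl h
          · simp only [mem_insert, mem_singleton] at h ⊢
            rcases h with rfl | rfl | rfl
            · simp
            · exact absurd (show x ∈ G.neighborFinset y ∩ K by simp [hx, hxy.symm]) (by simp [h0])
            · simp
      rcases hb K this with h | h
      · exact hne h
      · apply haK; rw [h]; simp [hab, hza.ne.symm]
    · by_contra h0
      have h0 : G.neighborFinset b ∩ K = ∅ := Finset.card_eq_zero.1 (by omega)
      have : Cl G {z, a} K := by
        refine ⟨?_, fun x hx y hxy => ?_⟩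
        · rw [Finset.disjoint_left]; intro x hx h
          rw [mem_insert, mem_singleton] at h
          rcases h with rfl | rfl <;> contradiction
        · rcases hK.2 x hx y hxy with h | h
          · exact Or.inl h
          · simp only [mem_insert, mem_singleton] at h ⊢
            rcases h with rfl | rfl | rfl
            · simp
            · simp
            · exact absurd (show x ∈ G.neighborFinset y ∩ K by simp [hx, hxy.symm]) (by simp [h0])
      rcases ha K this with h | h
      · exact hne h
      · apply hbK; rw [h]; simp [hab.symm, hzb.ne.symm]
    · have hcut := cut hreg σ hσ hK
      rw [Finset.sum_insert (by simp [hza.ne, hzb.ne]), Finset.sum_pair hab, hz, hσa, hσb] at hcut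
      push_cast at hcut
      linarith
  have hne2 := hK.compl_ne hne'
  have hzK : z ∉ K := fun h => (Finset.disjoint_left.1 hK.1 h) (by simp)
  have haK : a ∉ K := fun h => (Finset.disjoint_left.1 hK.1 h) (by simp)
  have hbK : b ∉ K := fun h => (Finset.disjoint_left.1 hK.1 h) (by simp)
  have tot : ∀ c, G.Adj z c → #(G.neighborFinset c ∩ K) +
      #(G.neighborFinset c ∩ (K ∪ {z, a, b})ᶜ) < 4 := by
    intro c hc
    rw [← hcard c, ← Finset.card_union_of_disjoint]
    · apply Finset.card_lt_card
      rw [Finset.ssubset_iff_of_subset (Finset.union_subset Finset.inter_subset_left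
        Finset.inter_subset_left)]
      exact ⟨z, by simpa using hc.symm, by simp [hzK]⟩
    · rw [Finset.disjoint_left]; intro x; simp; tauto
  have totz : #(G.neighborFinset z ∩ K) + #(G.neighborFinset z ∩ (K ∪ {z, a, b})ᶜ) + 2 ≤ 4 := by
    have e : #({a, b} : Finset V) = 2 := Finset.card_pair hab
    rw [← hcard z, ← e, ← Finset.card_union_of_disjoint, ← Finset.card_union_of_disjoint]
    · apply Finset.card_le_card
      intro x hx
      simp only [mem_union, mem_inter, mem_insert, mem_singleton] at hx
      rcases hx with (hx | hx) | rfl | rfl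
      · exact hx.1
      · exact hx.1
      · simpa using hza
      · simpa using hzb
    · rw [Finset.disjoint_left]; intro x hx h
      simp only [mem_insert, mem_singleton] at h
      rcases h with rfl | rfl <;> simp_all
    · rw [Finset.disjoint_left]; intro x; simp; tauto
  obtain ⟨f1, f2, f3⟩ := facts K hK hne
  obtain ⟨g1, g2, g3⟩ := facts _ hK.compl hne2
  have ta := tot a hza
  have tb := tot b hzb
  by_cases h0 : #(G.neighborFinset z ∩ K) = 0
  · exact ⟨K, hK, Finset.card_eq_zero.1 h0, by omega⟩
  · exact ⟨_, hK.compl, Finset.card_eq_zero.1 (by omega), by omega⟩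

lemma four_pair {G : SimpleGraph V} [DecidableRel G.Adj]
    (hreg : ∀ v, G.degree v = 4)
    (σ : V → ℤ) (hσ : ∀ x y, G.Adj x y → σ x = - σ y)
    {z a b c : V} (hz : σ z = 1) (hza : G.Adj z a) (hzb : G.Adj z b) (hzc : G.Adj z c)
    (hab : a ≠ b) (hac : a ≠ c) (hbc : b ≠ c)
    (hgood : ∀ a, G.Adj z a → Conn G {z, a}) :
    Conn G {z, a, b} ∨ Conn G {z, a, c} := by
  by_contra hcon
  push Not at hcon
  obtain ⟨K, hK, hK0, hK2⟩ := four_aux hreg σ hσ hz hza hzb hab (hgood a hza) (hgood b hzb) hcon.1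
  obtain ⟨L, hL, hL0, hL2⟩ := four_aux hreg σ hσ hz hza hzc hac (hgood a hza) (hgood c hzc) hcon.2
  have hzK : z ∉ K := fun h => (Finset.disjoint_left.1 hK.1 h) (by simp)
  have haK : a ∉ K := fun h => (Finset.disjoint_left.1 hK.1 h) (by simp)
  have hbK : b ∉ K := fun h => (Finset.disjoint_left.1 hK.1 h) (by simp)
  have hzL : z ∉ L := fun h => (Finset.disjoint_left.1 hL.1 h) (by simp)
  have hbL : b ∉ L := fun h => by
    have : b ∈ G.neighborFinset z ∩ L := by simp [h, hzb]
    simp [hL0] at this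
  have hcK : c ∉ K := fun h => by
    have : c ∈ G.neighborFinset z ∩ K := by simp [h, hzc]
    simp [hK0] at this
  have hne : (K ∩ L).Nonempty := by
    by_contra h0
    rw [Finset.not_nonempty_iff_eq_empty] at h0
    have : #(G.neighborFinset a ∩ K) + #(G.neighborFinset a ∩ L) < 4 := by
      rw [← hreg a, ← G.card_neighborFinset_eq_degree, ← Finset.card_union_of_disjoint]
      · apply Finset.card_lt_card
        rw [Finset.ssubset_iff_of_subset (Finset.union_subset Finset.inter_subset_left
          Finset.inter_subset_left)]
        exact ⟨z, by simpa using hza.symm, by simp [hzK, hzL]⟩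
      · rw [Finset.disjoint_left]; intro x hx hx'
        have : x ∈ K ∩ L := by
          rw [mem_inter] at *; exact ⟨hx.2, hx'.2⟩
        simp [h0] at this
    omega
  have hcl : Cl G {z, a} (K ∩ L) := by
    refine ⟨?_, fun x hx y hxy => ?_⟩
    · rw [Finset.disjoint_left]; intro x hx h
      rw [mem_insert, mem_singleton] at h
      rw [mem_inter] at hx
      rcases h with rfl | rfl
      · exact hzK hx.1
      · exact haK hx.1
    · rw [mem_inter] at hx
      have q1 := hK.2 x hx.1 y hxy
      have q2 := hL.2 x hx.2 y hxy
      simp only [mem_insert, mem_singleton, mem_inter] at q1 q2 ⊢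
      rcases q1 with q1 | rfl | rfl | rfl
      · rcases q2 with q2 | rfl | rfl | rfl
        · exact Or.inl ⟨q1, q2⟩
        · simp
        · simp
        · exact absurd q1 hcK
      · simp
      · simp
      · rcases q2 with q2 | rfl | rfl | rfl
        · exact absurd q2 hbL
        · simp
        · simp
        · exact absurd rfl hbc
  rcases hgood a hza _ hcl with h | h
  · simp [h] at hne
  · have : b ∈ K ∩ L := by rw [h]; simp [hab.symm, hzb.ne.symm]
    exact hbK (mem_inter.1 this).1

/-- Star at `a` with indicator `t`. -/
def star (a : V) (t : V → ZMod 2) : V → V → ZMod 2 := fun x y =>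
  if x = a then t y else if y = a then t x else 0

lemma star_sup {G : SimpleGraph V} {S : Finset V} {a : V} (ha : a ∉ S) {t : V → ZMod 2}
    (ht : ∀ y, t y ≠ 0 → G.Adj a y ∧ y ∉ S) : Sup G S (star a t) := by
  refine ⟨fun x y => ?_, fun x y h => ?_⟩
  · simp only [star]
    split_ifs <;> simp_all
  · simp only [star] at h
    split_ifs at h with h1 h2
    · subst h1; exact ⟨(ht y h).1, ha, (ht y h).2⟩
    · subst h2; exact ⟨(ht x h).1.symm, (ht x h).2, ha⟩
    · simp at h

lemma star_sum (a : V) (t : V → ZMod 2) (x : V) :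
    ∑ y, star a t x y = if x = a then ∑ y, t y else t x := by
  simp only [star]
  split_ifs with h
  · rfl
  · simp

/-- Cycle space elements with prescribed pair of edges at `a`. -/
lemma cyc {G : SimpleGraph V} {z a u s : V} (hc : Conn G {z, a}) (hza : z ≠ a)
    (hu : G.Adj a u) (hs : G.Adj a s) (huz : u ≠ z) (hsz : s ≠ z) :
    ∃ Z, Sup G {z} Z ∧ (∀ x, ∑ y, Z x y = 0) ∧
      ∀ y, Z a y = (Pi.single u 1 + Pi.single s 1 : V → ZMod 2) y := by
  set t : V → ZMod 2 := Pi.single u 1 + Pi.single s 1 with ht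
  have htsum : ∑ x, t x = 0 := by
    simp [ht, Finset.sum_add_distrib, z2add]
  have hta : t a = 0 := by simp [ht, hu.ne, hs.ne]
  have htz : t z = 0 := by simp [ht, huz.symm, hsz.symm]
  have htn : ∀ y, t y ≠ 0 → y = u ∨ y = s := by
    intro y hy
    by_contra hcon
    push Not at hcon
    apply hy
    simp [ht, hcon.1, hcon.2]
  obtain ⟨F, hF, hF'⟩ := tjoin_conn hc t htsum (by
    intro x hx
    rw [mem_insert, mem_singleton] at hx
    rcases hx with rfl | rfl <;> assumption)
  refine ⟨F + star a t, (hF.mono (by simp)).add (star_sup (by simpa using hza.symm) ?_), ?_, ?_⟩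
  · intro y hy
    rcases htn y hy with rfl | rfl
    · exact ⟨hu, by simpa using huz⟩
    · exact ⟨hs, by simpa using hsz⟩
  · intro x
    simp only [Pi.add_apply, Finset.sum_add_distrib]
    rw [hF', star_sum]
    split_ifs with h
    · rw [h, hta, htsum, add_zero]
    · exact z2add _
  · intro y
    have : F a y = 0 := by
      by_contra h
      exact (hF.2 a y h).2.1 (by simp)
    simp [this, star]

open Classical in
/-- All joins avoiding `z` with boundary `t`. -/
noncomputable def W (G : SimpleGraph V) (z : V) (t : V → ZMod 2) : Finset (V → V → ZMod 2) :=
  univ.filter fun F => Sup G {z} F ∧ ∀ x, ∑ y, F x y = t x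

open Classical in
/-- Those joins vanishing at `a`. -/
noncomputable def W0 (G : SimpleGraph V) (z : V) (t : V → ZMod 2) (a : V) :
    Finset (V → V → ZMod 2) :=
  (W G z t).filter fun F => ∀ y, F a y = 0

lemma count {G : SimpleGraph V} [DecidableRel G.Adj] {d : ℕ} (hd : 3 ≤ d)
    (hreg : ∀ v, G.degree v = d) {z a : V} (hza : G.Adj z a) (hc : Conn G {z, a})
    (t : V → ZMod 2) : 2 ^ (d - 2) * #(W0 G z t a) ≤ #(W G z t) := by
  classical
  set S := (G.neighborFinset a).erase z with hS
  have hScard : #S = d - 1 := by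
    rw [hS, Finset.card_erase_of_mem (by simpa using hza.symm), G.card_neighborFinset_eq_degree,
      hreg]
  obtain ⟨s, hs⟩ : S.Nonempty := Finset.card_pos.1 (by omega)
  have hs' : G.Adj a s ∧ s ≠ z := by
    rw [hS, mem_erase] at hs; exact ⟨by simpa using hs.2, hs.1⟩
  have hex : ∀ u : V, ∃ Z, u ∈ S.erase s → Sup G {z} Z ∧ (∀ x, ∑ y, Z x y = 0) ∧
      ∀ y, Z a y = (Pi.single u 1 + Pi.single s 1 : V → ZMod 2) y := by
    intro u
    by_cases hu : u ∈ S.erase s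
    · have hu' : G.Adj a u ∧ u ≠ z := by
        rw [mem_erase, hS, mem_erase] at hu; exact ⟨by simpa using hu.2.2, hu.2.1⟩
      obtain ⟨Z, hZ⟩ := cyc hc hza.ne hu'.1 hs'.1 hu'.2 hs'.2
      exact ⟨Z, fun _ => hZ⟩
    · exact ⟨0, fun h => absurd h hu⟩
  choose Z hZ using hex
  have hpow : 2 ^ (d - 2) = #((S.erase s).powerset) := by
    rw [Finset.card_powerset, Finset.card_erase_of_mem hs, hScard]
    congr 1
  rw [hpow, ← Finset.card_product]
  have key : ∀ U ∈ (S.erase s).powerset, ∀ F ∈ W0 G z t a, ∀ u ∈ S.erase s,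
      (F + ∑ v ∈ U, Z v) a u = if u ∈ U then 1 else 0 := by
    intro U hU F hF u hu
    rw [mem_powerset] at hU
    simp only [W0, mem_filter] at hF
    simp only [Pi.add_apply, Finset.sum_apply, hF.2 u, zero_add]
    have : ∀ v ∈ U, Z v a u = if v = u then 1 else 0 := by
      intro v hv
      rw [(hZ v (hU hv)).2.2 u]
      have hus : u ≠ s := (mem_erase.1 hu).1
      simp [Pi.single_apply, hus, eq_comm]
    rw [Finset.sum_congr rfl this]
    simp
  apply Finset.card_le_card_of_injOn (fun p => p.2 + ∑ v ∈ p.1, Z v)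
  · rintro ⟨U, F⟩ hp
    simp only [coe_product, Set.mem_prod, mem_coe, mem_powerset] at hp
    obtain ⟨hU, hF⟩ := hp
    simp only [W0, W, mem_filter, mem_univ, true_and] at hF
    simp only [W, coe_filter, Set.mem_ofPred_eq, mem_univ, true_and]
    refine ⟨hF.1.1.add (Sup.sum _ _ fun v hv => (hZ v (hU hv)).1), fun x => ?_⟩
    simp only [Pi.add_apply, Finset.sum_add_distrib, hF.1.2, Finset.sum_apply]
    rw [Finset.sum_comm, Finset.sum_eq_zero, add_zero]
    intro v hv
    exact (hZ v (hU hv)).2.1 x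
  · rintro ⟨U, F⟩ hp ⟨U', F'⟩ hp' heq
    simp only [coe_product, Set.mem_prod, mem_coe] at hp hp'
    simp only at heq
    have hUU : U = U' := by
      have k1 := key U hp.1 F hp.2
      have k2 := key U' hp'.1 F' hp'.2
      rw [heq] at k1
      have hU := mem_powerset.1 hp.1
      have hU' := mem_powerset.1 hp'.1
      ext u
      constructor
      · intro h
        have e := (k1 u (hU h)).symm.trans (k2 u (hU h))
        by_contra h'
        simp [h, h'] at e
      · intro h
        have e := (k1 u (hU' h)).symm.trans (k2 u (hU' h))
        by_contra h'
        simp [h, h'] at e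
    subst hUU
    have : F = F' := add_right_cancel heq
    rw [this]

lemma exists_nonzero {G : SimpleGraph V} [DecidableRel G.Adj] {d : ℕ} (hd : 4 ≤ d)
    (hreg : ∀ v, G.degree v = d)
    (σ : V → ℤ) (hσ : ∀ x y, G.Adj x y → σ x = - σ y)
    {z : V} (hz : σ z = 1) (hgood : ∀ a, G.Adj z a → Conn G {z, a})
    (t : V → ZMod 2) (ht : ∑ x, t x = 0) (htz : t z = 0) (hta : ∀ a, G.Adj z a → t a = 0) :
    ∃ F, Sup G {z} F ∧ (∀ x, ∑ y, F x y = t x) ∧ ∀ a, G.Adj z a → ∃ y, F a y ≠ 0 := by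
  classical
  by_contra hcon
  push Not at hcon
  have hcov : W G z t ⊆ (G.neighborFinset z).biUnion (W0 G z t) := by
    intro F hF
    have hF' := hF
    simp only [W, mem_filter, mem_univ, true_and] at hF'
    obtain ⟨a, ha, h0⟩ := hcon F hF'.1 hF'.2
    rw [mem_biUnion]
    exact ⟨a, by simpa using ha, by simp only [W0, mem_filter]; exact ⟨hF, h0⟩⟩
  have hcardz : #(G.neighborFinset z) = d := by
    rw [G.card_neighborFinset_eq_degree, hreg]
  have hsum : 2 ^ (d - 2) * ∑ a ∈ G.neighborFinset z, #(W0 G z t a) ≤ d * #(W G z t) := by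
    rw [Finset.mul_sum]
    calc _ ≤ ∑ a ∈ G.neighborFinset z, #(W G z t) := by
            refine Finset.sum_le_sum fun a ha => ?_
            rw [SimpleGraph.mem_neighborFinset] at ha
            exact count (by omega) hreg ha (hgood a ha) t
      _ = _ := by rw [Finset.sum_const, hcardz, smul_eq_mul]
  have mem0 : ∀ (S : Finset V) F a, z ∈ S → a ∈ S → Sup G S F → (∀ x, ∑ y, F x y = t x) →
      F ∈ W0 G z t a := by
    intro S F a hzS haS hF hF'
    simp only [W0, W, mem_filter, mem_univ, true_and]
    refine ⟨⟨hF.mono (by simpa using hzS), hF'⟩, fun y => ?_⟩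
    by_contra h
    exact (hF.2 a y h).2.1 haS
  have hle := (Finset.card_le_card hcov).trans Finset.card_biUnion_le
  obtain ⟨a, ha, b, hb, c, hc, hab, hac, hbc⟩ := Finset.two_lt_card.1 (by omega : 2 < #(G.neighborFinset z))
  simp only [SimpleGraph.mem_neighborFinset] at ha hb hc
  rcases Nat.eq_or_lt_of_le hd with h4 | h5
  · subst h4
    have : ∃ b', G.Adj z b' ∧ a ≠ b' ∧ Conn G {z, a, b'} := by
      rcases four_pair hreg σ hσ hz ha hb hc hab hac hbc hgood with h | h
      · exact ⟨b, hb, hab, h⟩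
      · exact ⟨c, hc, hac, h⟩
    obtain ⟨b', hb', hab', hcn⟩ := this
    obtain ⟨F, hF, hF'⟩ := tjoin_conn hcn t ht (by
      intro x hx
      simp only [mem_insert, mem_singleton] at hx
      rcases hx with rfl | rfl | rfl
      · exact htz
      · exact hta _ ha
      · exact hta _ hb')
    have m1 := mem0 _ F a (by simp) (by simp) hF hF'
    have m2 := mem0 _ F b' (by simp) (by simp) hF hF'
    have hcov2 : W G z t ⊆ (W0 G z t a).erase F ∪
        ((G.neighborFinset z).erase a).biUnion (W0 G z t) := by
      intro E hE
      have := hcov hE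
      rw [mem_biUnion] at this
      obtain ⟨x, hx, hEx⟩ := this
      rw [mem_union, mem_erase, mem_biUnion]
      by_cases hEF : E = F
      · right
        exact ⟨b', by simp [hab'.symm, hb'], hEF ▸ m2⟩
      · by_cases hxa : x = a
        · left; exact ⟨hEF, hxa ▸ hEx⟩
        · right; exact ⟨x, by rw [mem_erase]; exact ⟨hxa, hx⟩, hEx⟩
    have l1 := (Finset.card_le_card hcov2).trans (Finset.card_union_le _ _)
    have l2 : #(((G.neighborFinset z).erase a).biUnion (W0 G z t)) ≤ _ := Finset.card_biUnion_le
    have l3 := Finset.card_erase_lt_of_mem m1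
    have l4 := Finset.add_sum_erase (G.neighborFinset z) (fun a => #(W0 G z t a))
      (show a ∈ G.neighborFinset z by simpa using ha)
    norm_num at hsum
    omega
  · obtain ⟨F, hF, hF'⟩ := tjoin_conn (hgood a ha) t ht (by
      intro x hx
      simp only [mem_insert, mem_singleton] at hx
      rcases hx with rfl | rfl
      · exact htz
      · exact hta _ ha)
    have m1 := mem0 _ F a (by simp) (by simp) hF hF'
    have hpos : 0 < #(W G z t) := Finset.card_pos.2 ⟨F, (Finset.mem_filter.1 m1).1⟩
    have hp : d < 2 ^ (d - 2) := by
      obtain ⟨k, rfl⟩ : ∃ k, d = k + 5 := ⟨d - 5, by omega⟩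
      have := Nat.lt_two_pow_self (n := k)
      have e : k + 5 - 2 = k + 3 := by omega
      rw [e, pow_add]; omega
    have : 2 ^ (d - 2) * #(W G z t) ≤ d * #(W G z t) :=
      (Nat.mul_le_mul_left _ hle).trans hsum
    have := Nat.le_of_mul_le_mul_right this hpos
    omega

/-- Number of chosen edges at `u`. -/
def D (F : V → V → ZMod 2) (u : V) : ℕ := ∑ x, (F u x).val

lemma D_cast (F : V → V → ZMod 2) (u : V) : ((D F u : ℕ) : ZMod 2) = ∑ x, F u x := by
  simp [D]

lemma D_ne {F : V → V → ZMod 2} {u v : V} (h : ∑ x, F u x ≠ ∑ x, F v x) : D F u ≠ D F v := by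
  intro he
  apply h
  rw [← D_cast, ← D_cast, he]

theorem connected_case {G : SimpleGraph V} [DecidableRel G.Adj] {d : ℕ} (hd : 3 ≤ d)
    (hreg : ∀ v, G.degree v = d) (hc : Conn G ∅)
    (σ : V → ℤ) (hσ : ∀ x y, G.Adj x y → σ x = - σ y) (h1 : ∀ x, σ x = 1 ∨ σ x = -1) :
    ∃ F, Sup G ∅ F ∧ ∀ u v, G.Adj u v → D F u ≠ D F v := by
  suffices h : ∃ F, Sup G ∅ F ∧ ∀ u v, σ u = 1 → G.Adj u v → D F u ≠ D F v by
    obtain ⟨F, hF, hF'⟩ := h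
    refine ⟨F, hF, fun u v huv => ?_⟩
    rcases h1 u with hu | hu
    · exact hF' u v hu huv
    · exact (hF' v u (by rw [hσ v u huv.symm, hu]; rfl) huv.symm).symm
  have hneg : ∀ u v, σ u = 1 → G.Adj u v → σ v = -1 := fun u v hu huv => by
    rw [hσ v u huv.symm, hu]
  have hbal : #(univ.filter (fun x : V => σ x = 1)) = #(univ.filter (fun x : V => σ x = -1)) := by
    have hcut := cut hreg σ hσ (S := ∅) (K := univ) ⟨by simp, by simp⟩
    rw [Finset.sum_empty, neg_zero, sum_sigma σ h1] at hcut
    have : (d : ℤ) ≠ 0 := by omega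
    have := (mul_eq_zero.1 hcut).resolve_left this
    omega
  have one_ne : (1 : ZMod 2) ≠ 0 := by decide
  by_cases hev : Even #(univ.filter (fun x : V => σ x = -1))
  · obtain ⟨F, hF, hF'⟩ := tjoin_conn hc (fun x => if σ x = -1 then 1 else 0) (by
      rw [Finset.sum_boole]
      exact (ZMod.natCast_eq_zero_iff_even).2 hev) (by simp)
    refine ⟨F, hF, fun u v hu huv => D_ne ?_⟩
    rw [hF', hF']
    simp [hu, hneg u v hu huv]
  have hodd := Nat.not_even_iff_odd.1 hev
  have hex : ∃ z, σ z = 1 := by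
    have : 0 < #(univ.filter (fun x : V => σ x = 1)) := by rw [hbal]; exact hodd.pos
    obtain ⟨z, hz⟩ := Finset.card_pos.1 this
    exact ⟨z, (mem_filter.1 hz).2⟩
  rcases Nat.eq_or_lt_of_le hd with h3 | h4
  · subst h3
    obtain ⟨z, hz, hK⟩ := good_cubic hreg hc σ hσ h1 hex hodd
    set S := insert z (G.neighborFinset z) with hS
    obtain ⟨F, hF, hF'⟩ := tjoin G S (fun x => if σ x = -1 ∧ x ∉ S then 1 else 0) (by
      intro K hKc
      have e : ∀ x ∈ K, (if σ x = -1 ∧ x ∉ S then (1 : ZMod 2) else 0)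
          = if σ x = -1 then 1 else 0 := by
        intro x hx
        simp [Finset.disjoint_left.1 hKc.1 hx]
      rw [Finset.sum_congr rfl e, Finset.sum_boole]
      exact (ZMod.natCast_eq_zero_iff_even).2 (hK K hKc)) (by intro x hx; simp [hx])
    set t : V → ZMod 2 := fun x => if G.Adj z x then 1 else 0 with ht
    have htn : ∀ y, t y ≠ 0 → G.Adj z y := by
      intro y hy; by_contra h; simp [ht, h] at hy
    have hF0 : ∀ x ∈ S, ∀ y, F x y = 0 := by
      intro x hx y
      by_contra h
      exact (hF.2 x y h).2.1 hx
    refine ⟨F + star z t, (hF.mono (by simp)).add (star_sup (by simp) fun y hy =>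
      ⟨htn y hy, by simp⟩), fun u v hu huv => ?_⟩
    by_cases huz : u = z
    · subst huz
      have dz : D (F + star u t) u = 3 := by
        have e : ∀ x, ((F + star u t) u x).val = if G.Adj u x then 1 else 0 := by
          intro x
          simp only [Pi.add_apply, hF0 u (by simp [hS]) x, zero_add, star, if_true, ht]
          split_ifs <;> rfl
        simp only [D, e]
        rw [Finset.sum_boole, ← hreg u, ← G.card_neighborFinset_eq_degree]
        simp only [Nat.cast_id]
        congr 1
        ext x; simp
      have dv : D (F + star u t) v = 1 := by
        have e : ∀ x, ((F + star u t) v x).val = if x = u then 1 else 0 := by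
          intro x
          simp only [Pi.add_apply, hF0 v (by simp [hS, huv]) x, zero_add, star, huv.ne.symm,
            if_false, ht, huv, if_true]
          split_ifs <;> rfl
        simp only [D, e]
        simp
      rw [dz, dv]; norm_num
    · apply D_ne
      have hv := hneg u v hu huv
      have hvz : v ≠ z := by rintro rfl; rw [hz] at hv; norm_num at hv
      have hnu : ¬ G.Adj z u := fun h => by
        have := hneg z u hz h; rw [hu] at this; norm_num at this
      simp only [Pi.add_apply, Finset.sum_add_distrib, hF', star_sum, huz, hvz, if_false, ht, hnu,
        hu, hv]
      by_cases hzv : G.Adj z v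
      · simp [hS, hzv]
      · simp [hS, hzv, hvz]
  · obtain ⟨z, hz, hgood⟩ := good_z hd hreg hc σ hσ h1 hex
    obtain ⟨F, hF, hF', hF0⟩ := exists_nonzero h4 hreg σ hσ hz hgood
      (fun x => if σ x = 1 ∧ x ≠ z then 1 else 0) (by
        rw [Finset.sum_boole]
        apply (ZMod.natCast_eq_zero_iff_even).2
        have e : univ.filter (fun x : V => σ x = 1 ∧ x ≠ z)
            = (univ.filter (fun x : V => σ x = 1)).erase z := by
          ext x; simp [and_comm]
        rw [e, Finset.card_erase_of_mem (by simp [hz]), hbal]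
        exact Nat.Odd.sub_odd hodd odd_one) (by simp) (by
        intro a ha
        simp [hneg z a hz ha])
    refine ⟨F, hF.mono (by simp), fun u v hu huv => ?_⟩
    have hv := hneg u v hu huv
    by_cases huz : u = z
    · subst huz
      have dz : D F u = 0 := by
        apply Finset.sum_eq_zero
        intro x _
        have : F u x = 0 := by
          by_contra h
          exact (hF.2 u x h).2.1 (by simp)
        simp [this]
      obtain ⟨y, hy⟩ := hF0 v huv
      have : 0 < D F v := by
        apply Finset.sum_pos'
        · intro _ _; exact Nat.zero_le _
        · refine ⟨y, mem_univ _, ?_⟩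
          rw [Nat.pos_iff_ne_zero]
          simpa using hy
      omega
    · apply D_ne
      rw [hF', hF']
      simp [hu, hv, huz]

end RB

namespace RB

/-- Reduction of the general case to the connected one. -/
lemma component_case {V : Type*} [Fintype V] [DecidableEq V]
    (G : SimpleGraph V) [DecidableRel G.Adj] {d : ℕ} (hd : 3 ≤ d)
    (hreg : ∀ v, G.degree v = d) (σ : V → ℤ) (hσ : ∀ x y, G.Adj x y → σ x = - σ y)
    (h1 : ∀ x, σ x = 1 ∨ σ x = -1) (c : G.ConnectedComponent) :
    ∃ F : V → V → ZMod 2, (∀ x y, F x y = F y x) ∧ (∀ x y, F x y ≠ 0 → G.Adj x y) ∧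
      ∀ u v, G.Adj u v → G.connectedComponentMk u = c →
        ∑ x, (F u x).val ≠ ∑ x, (F v x).val := by
  classical
  let H := G.induce c.supp
  have hadj : ∀ x y : c.supp, H.Adj x y ↔ G.Adj x y := fun x y => Iff.rfl
  have hmem : ∀ u v, G.Adj u v → u ∈ c.supp → v ∈ c.supp := by
    intro u v huv hu
    rw [SimpleGraph.ConnectedComponent.mem_supp_iff] at hu ⊢
    rw [← hu]
    exact (SimpleGraph.ConnectedComponent.connectedComponentMk_eq_of_adj huv).symm
  have hdeg : ∀ v, H.degree v = d := by
    intro v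
    rw [← hreg v, ← SimpleGraph.card_neighborFinset_eq_degree,
      ← SimpleGraph.card_neighborFinset_eq_degree]
    refine Finset.card_bij (fun x _ => x.1) ?_ ?_ ?_
    · intro x hx
      rw [SimpleGraph.mem_neighborFinset] at hx ⊢
      exact hx
    · intro x _ y _ h; exact Subtype.ext h
    · intro y hy
      rw [SimpleGraph.mem_neighborFinset] at hy
      refine ⟨⟨y, hmem _ _ hy v.2⟩, ?_, rfl⟩
      rw [SimpleGraph.mem_neighborFinset]
      exact hy
  have hconn : H.Connected := c.connected_toSimpleGraph
  have hC : Conn H ∅ := by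
    intro K hK
    rcases K.eq_empty_or_nonempty with h | ⟨a, ha⟩
    · exact Or.inl h
    right
    ext y
    simp only [Finset.compl_empty, Finset.mem_univ, iff_true]
    obtain ⟨p⟩ := hconn.preconnected a y
    clear hconn
    induction p with
    | nil => exact ha
    | cons h p ih =>
      refine ih ?_
      rcases hK.2 _ ha _ h with h' | h'
      · exact h'
      · simp at h'
  obtain ⟨F, hF, hD⟩ := connected_case hd hdeg hC (fun x => σ x.1)
    (fun x y h => hσ _ _ h) (fun x => h1 _)
  have hsum : ∀ u : c.supp, ∑ x, ((if h : u.1 ∈ c.supp ∧ x ∈ c.supp then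
      F ⟨u.1, h.1⟩ ⟨x, h.2⟩ else 0 : ZMod 2)).val = D F u := by
    intro u
    unfold D
    symm
    refine Fintype.sum_of_injective Subtype.val Subtype.val_injective _ _ ?_ ?_
    · intro x hx
      have : x ∉ c.supp := fun h => hx ⟨⟨x, h⟩, rfl⟩
      rw [dif_neg (fun h => this h.2)]
      rfl
    · intro x
      rw [dif_pos ⟨u.2, x.2⟩]
  refine ⟨fun u v => if h : u ∈ c.supp ∧ v ∈ c.supp then F ⟨u, h.1⟩ ⟨v, h.2⟩ else 0, ?_, ?_, ?_⟩
  · intro x y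
    beta_reduce
    by_cases h : x ∈ c.supp ∧ y ∈ c.supp
    · rw [dif_pos h, dif_pos h.symm]; exact hF.1 _ _
    · rw [dif_neg h, dif_neg (fun h' => h h'.symm)]
  · intro x y hxy
    beta_reduce at hxy
    by_cases h : x ∈ c.supp ∧ y ∈ c.supp
    · rw [dif_pos h] at hxy; exact (hF.2 _ _ hxy).1
    · rw [dif_neg h] at hxy; exact absurd rfl hxy
  · intro u v huv hu
    have hu' : u ∈ c.supp := hu
    have hv' := hmem u v huv hu'
    have e1 := hsum ⟨u, hu'⟩
    have e2 := hsum ⟨v, hv'⟩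
    have e3 := hD ⟨u, hu'⟩ ⟨v, hv'⟩ huv
    rw [← e1, ← e2] at e3
    exact e3

end RB

/-- If `G` is a `d`-regular bipartite graph with `d ≥ 3`, then `χ^e_Σ(G) ≤ 2`:
there is an edge weighting with weights in `{1,2}` such that adjacent vertices
receive distinct sums of incident edge weights. -/
theorem regular_bipartite_sum_two_weighting {V : Type*} [Fintype V] [DecidableEq V]
    (G : SimpleGraph V) [DecidableRel G.Adj] (d : ℕ) (hd : 3 ≤ d)
    (hreg : ∀ v, G.degree v = d) (hbip : G.Colorable 2) :
    ∃ w : V → V → ℕ,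
      (∀ u v, w u v = w v u) ∧
      (∀ u v, G.Adj u v → w u v ∈ ({1, 2} : Set ℕ)) ∧
      (∀ u v, G.Adj u v →
        (∑ x ∈ G.neighborFinset u, w u x) ≠ (∑ x ∈ G.neighborFinset v, w v x)) := by
  classical
  obtain ⟨C⟩ := hbip
  let σ : V → ℤ := fun x => if C x = 0 then 1 else -1
  have hσ : ∀ x y, G.Adj x y → σ x = - σ y := by
    intro x y h
    have hne := C.valid h
    simp only [σ]
    generalize C x = a at *
    generalize C y = b at *
    fin_cases a <;> fin_cases b <;> simp_all
  have h1 : ∀ x, σ x = 1 ∨ σ x = -1 := by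
    intro x
    simp only [σ]
    split_ifs <;> simp
  choose F hs ha hD using RB.component_case G hd hreg σ hσ h1
  let E : V → V → ZMod 2 := fun u v => F (G.connectedComponentMk u) u v
  have hE0 : ∀ u v, E u v ≠ 0 → G.Adj u v := fun u v h => ha _ u v h
  have hEs : ∀ u v, E u v = E v u := by
    intro u v
    by_cases h : G.Adj u v
    · have e := SimpleGraph.ConnectedComponent.connectedComponentMk_eq_of_adj h
      simp only [E]
      rw [e]
      exact hs _ _ _
    · have a1 : E u v = 0 := by
        by_contra h'; exact h (hE0 _ _ h')
      have a2 : E v u = 0 := by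
        by_contra h'; exact h (hE0 _ _ h').symm
      rw [a1, a2]
  have hsum : ∀ u, ∑ x ∈ G.neighborFinset u, (1 + (E u x).val) = d + ∑ x, (E u x).val := by
    intro u
    rw [Finset.sum_add_distrib, Finset.sum_const, SimpleGraph.card_neighborFinset_eq_degree,
      hreg, smul_eq_mul, mul_one]
    congr 1
    refine Finset.sum_subset (Finset.subset_univ _) ?_
    intro x _ hx
    rw [SimpleGraph.mem_neighborFinset] at hx
    have : E u x = 0 := by
      by_contra h'; exact hx (hE0 _ _ h')
    rw [this]; rfl
  refine ⟨fun u v => 1 + (E u v).val, ?_, ?_, ?_⟩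
  · intro u v
    simp only
    rw [hEs]
  · intro u v _
    have := ZMod.val_lt (E u v)
    simp only [Set.mem_insert_iff, Set.mem_singleton_iff]
    omega
  · intro u v huv
    simp only
    rw [hsum, hsum]
    have e := SimpleGraph.ConnectedComponent.connectedComponentMk_eq_of_adj huv
    have := hD _ u v huv rfl
    simp only [E]
    rw [← e]
    omega
end
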